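/- There exists a constant K = K(n) < ∞, depending only on n, such that for every d ≥ 1 the probability that n + 1 independent random Bernoulli polynomials f_1, …, f_{n+1} of degree d in n variables have a common zero in ℂ^n, i.e. Prob_d{ε : ∃ x ∈ ℂ^n with f_i(x) = 0 for all i = 1, …, n+1}, is at most K/d. -/

import Mathlib

/-!
The union bound over points is replaced by a finite count, fed by estimates for the probability
that one random polynomial vanishes at one point.

*Anticoncentration.* Freezing all signs except those of the powers of one coordinate `z` of the
point, it suffices to bound the atoms of `∑ ± z ^ j`, `0 ≤ j ≤ d` (`card_zeroSet_le`). For `z ≠ 0` and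
any `k` they are `O(d ^ (-k))`, unless `z` lies in a finite set depending only on `k`
(`coeff_le_of_not_special`). Indeed, if `z` is a root of no nonzero integer polynomial of degree less
than `2 * k`, the sum splits into about `d / (2 * k)` blocks, each spanned by `2 * k` integrally
independent numbers. By repeated Cauchy–Schwarz (`coeff_prod_le`) its atoms are at most the return
probability of a simple walk of length about `d / (2 * k)` in `2 * k` dimensions. If `z` is a root of
no nonzero polynomial with coefficients `0, ±1`, then all signed sums are distinct. In the remaining
case `z` is an algebraic integer of bounded degree whose conjugates all have modulus at most `2`, and
there are finitely many of these (`mem_special`, `special_finite`).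

*Counting.* Let `G` be a set of points at each of which one random polynomial vanishes with
probability at most `q`. Take an array of `n + 1` rows of `m` independent random polynomials. A system
with one polynomial from each row is seen if it has a common zero at which no other polynomial of the
array vanishes. By linear algebra at most `((n + 1) * m * d + 1) ^ n` of the `m ^ (n + 1)` systems are
seen (`card_exact_le`). For `m` of order `1 / q`, a system with a common zero in `G` is seen with
probability at least `1/2`. Hence a common zero in `G` exists with probability
`O((m * d) ^ n / m ^ (n + 1)) = O(d ^ n * q)` (`card_bad_le`).

*Conclusion.* With `k = n + 1`, the points having a coordinate that is neither zero nor special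
satisfy the second part with `q = O(d ^ (-(n + 1)))`, and contribute `O(1 / d)`. The finitely many
other points contribute at most `2 / d` each (`card_common_zero_le`), as the atoms of `∑ ± z ^ j` are
`O(d ^ (-1/2))` for every `z ≠ 0` and there are at least two equations; the origin is never a zero.
-/

open MeasureTheory Filter
open scoped Classical

/-- The set of exponent vectors `J` with `J₁ + ⋯ + Jₙ ≤ d` (each coordinate is then `≤ d`). -/
abbrev Idx (n d : ℕ) := {J : Fin n → Fin (d + 1) // (∑ j, (J j : ℕ)) ≤ d}

/-- A sign choice for a system of `n + 1` Bernoulli polynomials in `n` variables. -/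
abbrev Signs' (n d : ℕ) := Fin (n + 1) → Idx n d → Bool

noncomputable def sgn (b : Bool) : ℂ := if b then 1 else -1

/-- The `i`-th of the `n + 1` Bernoulli polynomials, evaluated at `x ∈ ℂⁿ`. -/
noncomputable def fSys' (n d : ℕ) (ε : Signs' n d) (i : Fin (n + 1)) (x : Fin n → ℂ) : ℂ :=
  ∑ J : Idx n d, sgn (ε i J) * ∏ j, x j ^ (J.1 j : ℕ)

/-- Uniform probability of an event on the finite space of sign choices. -/
noncomputable def Pd' (n d : ℕ) (E : Set (Signs' n d)) : ℝ :=
  (E.ncard : ℝ) / (Fintype.card (Signs' n d) : ℝ)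

/-! ### Atoms of random signed sums -/

/-- The law of `±a` with a fair sign, written `½ δ_a + ½ δ_{-a}` in the group algebra `ℝ[ℂ]` of the
additive group `ℂ`. Multiplication in `ℝ[ℂ]` is convolution, i.e. addition of independent
variables. -/
noncomputable def coin (a : ℂ) : AddMonoidAlgebra ℝ ℂ :=
  AddMonoidAlgebra.single a (1 / 2) + AddMonoidAlgebra.single (-a) (1 / 2)

lemma coin_eq_sum (a : ℂ) :
    coin a = ∑ b : Bool, AddMonoidAlgebra.single (sgn b * a) (1 / 2 : ℝ) := by
  simp [coin, sgn]

/-- The coefficient of `∏ coin (w i)` at `c` is the probability that the random signed sum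
`∑ ± w i` equals `c`. -/
lemma coeff_prod_coin {ι : Type} [Fintype ι] [DecidableEq ι] (w : ι → ℂ) (c : ℂ) :
    (∏ i, coin (w i)).coeff c =
      ((Finset.univ.filter fun ε : ι → Bool => ∑ i, sgn (ε i) * w i = c).card : ℝ)
        / 2 ^ Fintype.card ι := by
  simp only [coin_eq_sum]
  rw [Finset.prod_univ_sum]
  simp only [AddMonoidAlgebra.prod_single, AddMonoidAlgebra.coeff_sum, Finsupp.finsetSum_apply,
    AddMonoidAlgebra.coeff_single, Finsupp.single_apply, Fintype.piFinset_univ]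
  rw [← Finset.sum_filter]
  simp [div_eq_mul_inv]

lemma coeff_coin_mul (a : ℂ) (φ : AddMonoidAlgebra ℝ ℂ) (c : ℂ) :
    (coin a * φ).coeff c = (φ.coeff (-a + c) + φ.coeff (a + c)) / 2 := by
  simp [coin, add_mul, AddMonoidAlgebra.coeff_single_mul_apply]
  ring

/-- Convolving with further signed steps cannot raise the largest atom. -/
lemma coeff_prod_coin_mul_le {ι : Type} (s : Finset ι) (w : ι → ℂ) (φ : AddMonoidAlgebra ℝ ℂ)
    {t : ℝ} (h : ∀ c, φ.coeff c ≤ t) (c : ℂ) : ((∏ i ∈ s, coin (w i)) * φ).coeff c ≤ t := by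
  induction s using Finset.induction_on generalizing c with
  | empty => simpa using h c
  | insert a s ha ih =>
    rw [Finset.prod_insert ha, mul_assoc, coeff_coin_mul]
    linarith [ih (-w a + c), ih (w a + c)]

/-- An element of `ℝ[ℂ]` is symmetric if it is invariant under `u ↦ -u`. -/
def IsSymm (φ : AddMonoidAlgebra ℝ ℂ) : Prop := ∀ u, φ.coeff (-u) = φ.coeff u

lemma coeff_mul_eq_sum (φ ψ : AddMonoidAlgebra ℝ ℂ) (c : ℂ) :
    (φ * ψ).coeff c = ∑ u ∈ φ.coeff.support, φ.coeff u * ψ.coeff (-u + c) := by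
  rw [AddMonoidAlgebra.coeff_mul_apply_left]
  rfl

lemma IsSymm.mul {φ ψ : AddMonoidAlgebra ℝ ℂ} (hφ : IsSymm φ) (hψ : IsSymm ψ) :
    IsSymm (φ * ψ) := by
  intro c
  rw [coeff_mul_eq_sum, coeff_mul_eq_sum]
  refine Finset.sum_nbij' (fun u => -u) (fun u => -u) ?_ ?_ ?_ ?_ ?_
  · intro u hu; simpa [hφ u] using hu
  · intro u hu; simpa [hφ u] using hu
  · simp
  · simp
  · intro u _
    simp only [hφ u]
    rw [← hψ]
    congr 2
    ring

lemma isSymm_coin (a : ℂ) : IsSymm (coin a) := by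
  intro u
  simp only [coin, AddMonoidAlgebra.coeff_add, AddMonoidAlgebra.coeff_single, Finsupp.add_apply,
    Finsupp.single_apply, neg_inj]
  rw [add_comm]
  congr 2
  exact propext ⟨fun h => by rw [h, neg_neg], fun h => by rw [← h, neg_neg]⟩

lemma isSymm_one : IsSymm 1 := by
  intro u
  simp [AddMonoidAlgebra.one_def, Finsupp.single_apply, eq_comm]

lemma isSymm_prod {ι : Type} (s : Finset ι) (f : ι → AddMonoidAlgebra ℝ ℂ)
    (h : ∀ i, IsSymm (f i)) : IsSymm (∏ i ∈ s, f i) := by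
  induction s using Finset.induction_on with
  | empty => simpa using isSymm_one
  | insert a s ha ih => rw [Finset.prod_insert ha]; exact (h a).mul ih

/-- For symmetric `φ`, the mass of `φ * φ` at `0` is the squared `ℓ²`-norm of `φ`. -/
lemma IsSymm.coeff_sq {φ : AddMonoidAlgebra ℝ ℂ} (hφ : IsSymm φ) :
    (φ ^ 2).coeff 0 = ∑ u ∈ φ.coeff.support, φ.coeff u ^ 2 := by
  rw [sq, coeff_mul_eq_sum]
  refine Finset.sum_congr rfl fun u _ => ?_
  rw [add_zero, hφ, sq]

/-- Cauchy–Schwarz for a coefficient of a convolution of symmetric elements. -/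
lemma IsSymm.coeff_mul_sq_le {φ ψ : AddMonoidAlgebra ℝ ℂ} (hφ : IsSymm φ) (hψ : IsSymm ψ)
    (c : ℂ) : ((φ * ψ).coeff c) ^ 2 ≤ (φ ^ 2).coeff 0 * (ψ ^ 2).coeff 0 := by
  rw [hφ.coeff_sq, hψ.coeff_sq, coeff_mul_eq_sum]
  refine (Finset.sum_mul_sq_le_sq_mul_sq _ _ _).trans ?_
  refine mul_le_mul_of_nonneg_left ?_ (Finset.sum_nonneg fun _ _ => sq_nonneg _)
  rw [← Finset.sum_filter_of_ne (p := fun u => -u + c ∈ ψ.coeff.support)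
    (fun u _ hu => by simpa using hu)]
  -- `u ↦ c - u` injects the terms that are left into the support of `ψ`
  rw [← Finset.sum_image (s := Finset.filter _ _) (g := fun u => -u + c)
    (f := fun v => ψ.coeff v ^ 2) (fun a _ b _ h => by simpa using h)]
  refine Finset.sum_le_sum_of_subset_of_nonneg ?_ (fun _ _ _ => sq_nonneg _)
  intro v hv
  simp only [Finset.mem_image, Finset.mem_filter] at hv
  obtain ⟨u, ⟨_, h⟩, rfl⟩ := hv
  exact h

lemma IsSymm.coeff_mul_le {φ ψ : AddMonoidAlgebra ℝ ℂ} (hφ : IsSymm φ) (hψ : IsSymm ψ)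
    {t : ℝ} (ht : 0 ≤ t) (h₁ : (φ ^ 2).coeff 0 ≤ t) (h₂ : (ψ ^ 2).coeff 0 ≤ t) (c : ℂ) :
    (φ * ψ).coeff c ≤ t := by
  refine abs_le_of_sq_le_sq' ?_ ht |>.2
  refine (hφ.coeff_mul_sq_le hψ c).trans ?_
  rw [sq t]
  refine mul_le_mul h₁ h₂ ?_ ht
  rw [hψ.coeff_sq]
  exact Finset.sum_nonneg fun _ _ => sq_nonneg _

/-- Halász-type splitting: repeated Cauchy–Schwarz replaces a product of `2 ^ (m + 1)` different
symmetric factors by the return masses of the `2 ^ (m + 1)`-fold convolution powers of the single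
factors. -/
lemma coeff_prod_le (m : ℕ) (ψ : ℕ → AddMonoidAlgebra ℝ ℂ) (hψ : ∀ b, IsSymm (ψ b))
    {t : ℝ} (ht : 0 ≤ t) (h : ∀ b, (ψ b ^ 2 ^ (m + 1)).coeff 0 ≤ t) (c : ℂ) :
    (∏ b ∈ Finset.range (2 ^ (m + 1)), ψ b).coeff c ≤ t := by
  induction m generalizing ψ c with
  | zero =>
    rw [zero_add, pow_one, Finset.prod_range_succ, Finset.prod_range_one]
    exact (hψ 0).coeff_mul_le (hψ 1) ht (by simpa using h 0) (by simpa using h 1) c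
  | succ m ih =>
    rw [pow_succ _ (m + 1), mul_two, Finset.prod_range_add]
    -- apply the induction hypothesis to the squares of the factors in each half
    have key : ∀ ψ' : ℕ → AddMonoidAlgebra ℝ ℂ, (∀ b, IsSymm (ψ' b)) →
        (∀ b, (ψ' b ^ 2 ^ (m + 2)).coeff 0 ≤ t) →
        ((∏ b ∈ Finset.range (2 ^ (m + 1)), ψ' b) ^ 2).coeff 0 ≤ t := by
      intro ψ' h1 h2
      rw [← Finset.prod_pow]
      refine ih _ (fun b => ?_) (fun b => ?_) 0
      · rw [sq]; exact (h1 b).mul (h1 b)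
      · rw [← pow_mul, ← pow_succ']; exact h2 b
    exact (isSymm_prod _ _ hψ).coeff_mul_le (isSymm_prod _ _ fun b => hψ _) ht
      (key _ hψ h) (key _ (fun b => hψ _) fun b => h _) c

lemma coin_pow (a : ℂ) (N : ℕ) :
    coin a ^ N = ∑ k ∈ Finset.range (N + 1),
      AddMonoidAlgebra.single ((2 * k - N : ℂ) * a) ((N.choose k : ℝ) / 2 ^ N) := by
  rw [coin, add_pow]
  refine Finset.sum_congr rfl fun k hk => ?_
  have hk' : k ≤ N := Nat.lt_succ_iff.1 (Finset.mem_range.1 hk)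
  rw [AddMonoidAlgebra.single_pow, AddMonoidAlgebra.single_pow,
    AddMonoidAlgebra.single_mul_single, AddMonoidAlgebra.natCast_def,
    AddMonoidAlgebra.single_mul_single]
  congr 1
  · simp only [nsmul_eq_mul, Nat.cast_sub hk']; ring
  · rw [← pow_add, Nat.add_sub_cancel' hk']
    rw [one_div, inv_pow]; ring

/-- If `v` is `ℤ`-linearly independent, a return to `0` of `2 * h` steps of the walk `∑ ± v i` forces
each of the `r` coordinate walks to return to `0`, whence the product of the `r` probabilities. -/
lemma coeff_prod_coin_pow_le {r : ℕ} (v : Fin r → ℂ)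
    (hv : ∀ c : Fin r → ℤ, ∑ i, (c i : ℂ) * v i = 0 → c = 0) (h : ℕ) :
    ((∏ i, coin (v i)) ^ (2 * h)).coeff 0 ≤ ((h.centralBinom : ℝ) / 4 ^ h) ^ r := by
  rw [← Finset.prod_pow]
  simp only [coin_pow]
  -- only the term with exactly `h` plus signs in every coordinate lands at `0`
  rw [Finset.prod_univ_sum]
  simp only [AddMonoidAlgebra.prod_single, AddMonoidAlgebra.coeff_sum, Finsupp.finsetSum_apply,
    AddMonoidAlgebra.coeff_single, Finsupp.single_apply]
  rw [Finset.sum_eq_single (fun _ => h)]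
  · simp [Nat.centralBinom, pow_mul]
    rw [div_pow]
    norm_num
  · intro k _ hk
    rw [if_neg]
    intro h0
    apply hk
    have := hv (fun i => 2 * (k i : ℤ) - 2 * h) (by rw [← h0]; push_cast; rfl)
    funext i
    have := congrFun this i
    simp only [Pi.zero_apply] at this
    omega
  · intro hn
    simp at hn
    omega

/-- The simple walk of length `2 * h` is at `0` with probability at most `(2 * h + 1) ^ (-1/2)`. -/
lemma centralBinom_bound (h : ℕ) : ((h.centralBinom : ℝ) / 4 ^ h) ^ 2 ≤ 1 / (2 * h + 1) := by
  induction h with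
  | zero => simp
  | succ h ih =>
    have e : ((h : ℝ) + 1) * (h + 1).centralBinom = 2 * (2 * h + 1) * h.centralBinom := by
      exact_mod_cast Nat.succ_mul_centralBinom_succ h
    have e2 : ((h + 1).centralBinom : ℝ) / 4 ^ (h + 1) =
        (2 * h + 1) / (2 * h + 2) * (h.centralBinom / 4 ^ h) := by
      have : ((h : ℝ) + 1) ≠ 0 := by positivity
      rw [pow_succ]
      field_simp
      linear_combination 2 * e
    rw [e2, mul_pow]
    refine (mul_le_mul_of_nonneg_left ih (sq_nonneg _)).trans ?_
    rw [div_pow, div_mul_div_comm, div_le_div_iff₀ (by positivity) (by positivity)]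
    push_cast
    nlinarith [sq_nonneg (h : ℝ), (Nat.cast_nonneg h : (0:ℝ) ≤ h)]

/-! ### Signed sums of powers and the exceptional points -/

lemma prod_range_mul_block {M : Type*} [CommMonoid M] (f : ℕ → M) (r B : ℕ) :
    ∏ j ∈ Finset.range (r * B), f j =
      ∏ b ∈ Finset.range B, ∏ i ∈ Finset.range r, f (r * b + i) := by
  induction B with
  | zero => simp
  | succ B ih => rw [Nat.mul_succ, Finset.prod_range_add, ih, Finset.prod_range_succ]

lemma coeff_prod_range_le {w : ℕ → ℂ} {N N' : ℕ} (hN : N' ≤ N) {t : ℝ}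
    (h : ∀ c, (∏ j ∈ Finset.range N', coin (w j)).coeff c ≤ t) (c : ℂ) :
    (∏ j ∈ Finset.range N, coin (w j)).coeff c ≤ t := by
  obtain ⟨k, rfl⟩ := Nat.exists_eq_add_of_le hN
  rw [Finset.prod_range_add, mul_comm]
  exact coeff_prod_coin_mul_le _ _ _ h c

/-- If `1, x, …, x ^ (r - 1)` are `ℤ`-independent, cut the powers of `x` into consecutive blocks of
length `r`. Each block is a multiple of the first one, hence independent, so `coeff_prod_le` and
`coeff_prod_coin_pow_le` apply. -/
lemma coeff_pow_le_of_indep {x : ℂ} (hx : x ≠ 0) {r m N : ℕ} (hN : r * 2 ^ (m + 1) ≤ N)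
    (hind : ∀ p : Polynomial ℤ, p.natDegree < r → Polynomial.aeval x p = 0 → p = 0) (c : ℂ) :
    (∏ j ∈ Finset.range N, coin (x ^ j)).coeff c ≤
      (((2 ^ m).centralBinom : ℝ) / 4 ^ 2 ^ m) ^ r := by
  refine coeff_prod_range_le hN (fun c => ?_) c
  rw [prod_range_mul_block]
  refine coeff_prod_le m _ (fun b => isSymm_prod _ _ fun i => isSymm_coin _) (by positivity)
    (fun b => ?_) c
  rw [Finset.prod_range, pow_succ']
  refine coeff_prod_coin_pow_le _ (fun e he => ?_) _
  have h0 : x ^ (r * b) * ∑ i : Fin r, (e i : ℂ) * x ^ (i : ℕ) = 0 := by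
    rw [← he, Finset.mul_sum]
    refine Finset.sum_congr rfl fun i _ => ?_
    rw [pow_add]; ring
  have h1 := (mul_eq_zero.1 h0).resolve_left (pow_ne_zero _ hx)
  rcases Nat.eq_zero_or_pos r with rfl | hr
  · exact Subsingleton.elim _ _
  have hp := hind (∑ i : Fin r, Polynomial.monomial (i : ℕ) (e i)) ?_ ?_
  · funext i
    have := congrArg (fun p => p.coeff (i : ℕ)) hp
    simpa [Polynomial.finsetSum_coeff, Polynomial.coeff_monomial, Fin.val_inj] using this
  · refine (Nat.le_sub_one_iff_lt hr).1 (Polynomial.natDegree_sum_le_of_forall_le _ _ fun i _ => ?_)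
    exact (Polynomial.natDegree_monomial_le _).trans (by omega)
  · simpa [Polynomial.aeval_monomial] using h1

/-- If `x` is a root of no nonzero polynomial with coefficients in `{-1, 0, 1}`, then distinct sign
vectors give distinct signed sums. -/
lemma coeff_pow_le_of_no_signs {x : ℂ} {N : ℕ}
    (hno : ∀ p : Polynomial ℤ, (∀ i, p.coeff i = 0 ∨ p.coeff i = 1 ∨ p.coeff i = -1) →
      Polynomial.aeval x p = 0 → p = 0) (c : ℂ) :
    (∏ j ∈ Finset.range N, coin (x ^ j)).coeff c ≤ 1 / 2 ^ N := by
  rw [Finset.prod_range, coeff_prod_coin, Fintype.card_fin]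
  gcongr
  norm_cast
  refine Finset.card_le_one.2 fun ε hε δ hδ => ?_
  simp only [Finset.mem_filter, Finset.mem_univ, true_and] at hε hδ
  -- half the difference of the two sign vectors
  let g : Fin N → ℤ := fun i => (if ε i then 1 else 0) - (if δ i then 1 else 0)
  have hg : ∀ i, (g i = 0 ∨ g i = 1 ∨ g i = -1) ∧ (g i = 0 → ε i = δ i) := by
    intro i
    simp only [g]
    cases ε i <;> cases δ i <;> simp
  have hp := hno (∑ i : Fin N, Polynomial.monomial (i : ℕ) (g i)) ?_ ?_
  · funext i
    have := congrArg (fun p => p.coeff (i : ℕ)) hp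
    exact (hg i).2
      (by simpa [Polynomial.finsetSum_coeff, Polynomial.coeff_monomial, Fin.val_inj] using this)
  · intro i
    rw [Polynomial.finsetSum_coeff]
    simp only [Polynomial.coeff_monomial]
    by_cases hi : i < N
    · rw [Finset.sum_eq_single (⟨i, hi⟩ : Fin N)]
      · simpa using (hg ⟨i, hi⟩).1
      · intro b _ hb
        exact if_neg fun h => hb (Fin.ext h)
      · simp
    · left
      exact Finset.sum_eq_zero fun b _ => if_neg fun h => hi (by rw [← h]; exact b.2)
  · have h2 : ∀ i, (g i : ℂ) = (sgn (ε i) - sgn (δ i)) / 2 := by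
      intro i
      simp only [g, sgn]
      cases ε i <;> cases δ i <;> norm_num
    simp only [map_sum, Polynomial.aeval_monomial, algebraMap_int_eq, eq_intCast, h2]
    calc _ = (∑ i : Fin N, sgn (ε i) * x ^ (i : ℕ) - ∑ i : Fin N, sgn (δ i) * x ^ (i : ℕ)) / 2 := by
            rw [← Finset.sum_sub_distrib, Finset.sum_div]
            exact Finset.sum_congr rfl fun i _ => by ring
      _ = 0 := by rw [hε, hδ]; simp

/-- Roots of nonzero `{-1, 0, 1}`-polynomials have modulus at most `2`. -/
lemma norm_le_two_of_root {p : Polynomial ℤ} (hp0 : p ≠ 0)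
    (hp : ∀ i, p.coeff i = 0 ∨ p.coeff i = 1 ∨ p.coeff i = -1) {y : ℂ}
    (hy : Polynomial.aeval y p = 0) : ‖y‖ ≤ 2 := by
  by_contra! hlt
  have hc : ∀ i, ‖(p.coeff i : ℂ)‖ ≤ 1 := by
    intro i
    rcases hp i with h | h | h <;> simp [h]
  have hl : ‖(p.coeff p.natDegree : ℂ)‖ = 1 := by
    rcases hp p.natDegree with h | h | h
    · exact absurd (Polynomial.leadingCoeff_eq_zero.1 h) hp0
    all_goals simp [h]
  rw [Polynomial.aeval_eq_sum_range, Finset.sum_range_succ] at hy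
  have h1 : ‖y‖ ^ p.natDegree ≤ ∑ i ∈ Finset.range p.natDegree, ‖y‖ ^ i := by
    calc ‖y‖ ^ p.natDegree = ‖p.coeff p.natDegree • y ^ p.natDegree‖ := by
          rw [zsmul_eq_mul, norm_mul, hl, one_mul, norm_pow]
      _ = ‖∑ i ∈ Finset.range p.natDegree, p.coeff i • y ^ i‖ := by
          rw [eq_neg_of_add_eq_zero_right hy, norm_neg]
      _ ≤ _ := by
          refine norm_sum_le_of_le _ fun i _ => ?_
          rw [zsmul_eq_mul, norm_mul, norm_pow]
          exact mul_le_of_le_one_left (by positivity) (hc i)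
  -- the geometric sum is `(‖y‖ ^ deg - 1) / (‖y‖ - 1) < ‖y‖ ^ deg` when `‖y‖ > 2`
  have h2 := geom_sum_mul (‖y‖) p.natDegree
  have h3 : 0 ≤ ∑ i ∈ Finset.range p.natDegree, ‖y‖ ^ i := Finset.sum_nonneg fun _ _ => by positivity
  nlinarith

/-- A finite set of exceptional points: all roots of integer polynomials of degree at most `r` whose
coefficients are bounded by `2 ^ r * r.choose (r / 2)`. This bound holds for the coefficients of a
monic polynomial of degree at most `r` all of whose roots have modulus at most `2`. -/
def special (r : ℕ) : Set ℂ :=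
  ⋃ (f : Polynomial ℤ) (_ : f.natDegree ≤ r ∧
      ∀ i, f.coeff i ∈ Set.Icc (-(2 ^ r * r.choose (r / 2) : ℤ)) (2 ^ r * r.choose (r / 2))),
    ((f.map (algebraMap ℤ ℂ)).roots.toFinset : Set ℂ)

lemma special_finite (r : ℕ) : (special r).Finite :=
  Polynomial.bUnion_roots_finite (algebraMap ℤ ℂ) r (Set.finite_Icc _ _)

/-- A number that is a root both of a nonzero `{-1, 0, 1}`-polynomial and of a nonzero integer
polynomial of degree less than `r` is special: it is an algebraic integer of degree at most `r`, and
its conjugates, being roots of the `{-1, 0, 1}`-polynomial too, have modulus at most `2`. -/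
lemma mem_special {r : ℕ} {x : ℂ} {p q : Polynomial ℤ} (hp0 : p ≠ 0)
    (hp : ∀ i, p.coeff i = 0 ∨ p.coeff i = 1 ∨ p.coeff i = -1)
    (hpx : Polynomial.aeval x p = 0) (hq0 : q ≠ 0) (hq : q.natDegree < r)
    (hqx : Polynomial.aeval x q = 0) : x ∈ special r := by
  have hint : IsIntegral ℤ x := by
    rcases hp p.natDegree with h | h | h
    · exact absurd (Polynomial.leadingCoeff_eq_zero.1 h) hp0
    · exact ⟨p, h, by simpa [Polynomial.aeval_def] using hpx⟩
    · refine ⟨-p, ?_, ?_⟩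
      · rw [Polynomial.Monic, Polynomial.leadingCoeff_neg, Polynomial.leadingCoeff, h]; norm_num
      · simpa [Polynomial.aeval_def] using hpx
  have hdeg : (minpoly ℤ x).natDegree ≤ r :=
    (Polynomial.natDegree_le_of_dvd (minpoly.isIntegrallyClosed_dvd hint hqx) hq0).trans hq.le
  have hmon := minpoly.monic hint
  have hdvd := minpoly.isIntegrallyClosed_dvd hint hpx
  simp only [special, Set.mem_iUnion]
  refine ⟨minpoly ℤ x, ⟨hdeg, fun i => ?_⟩, ?_⟩
  · have := Polynomial.coeff_bdd_of_roots_le (B := 2) (d := r) (RingHom.id ℂ)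
      (p := (minpoly ℤ x).map (algebraMap ℤ ℂ)) (hmon.map _) (IsAlgClosed.splits _)
      (by rwa [hmon.natDegree_map]) (fun z hz => ?_) i
    · rw [Polynomial.map_id, Polynomial.coeff_map, max_eq_left one_le_two] at this
      rw [Set.mem_Icc, ← abs_le, ← @Int.cast_le ℝ]
      push_cast
      simpa using this
    · rw [Polynomial.map_id] at hz
      refine norm_le_two_of_root hp0 hp ?_
      obtain ⟨s, hs⟩ := hdvd
      have hz' := (Polynomial.mem_roots'.1 hz).2
      rw [Polynomial.IsRoot, Polynomial.eval_map_algebraMap] at hz'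
      rw [hs, map_mul, hz', zero_mul]
  · simp only [Finset.mem_coe, Multiset.mem_toFinset]
    refine Polynomial.mem_roots'.2 ⟨(hmon.map _).ne_zero, ?_⟩
    rw [Polynomial.IsRoot, Polynomial.eval_map_algebraMap]
    exact minpoly.aeval ℤ x

/-! ### Vanishing of one Bernoulli polynomial at one point -/

lemma coeff_prod_le_one {ι : Type} (s : Finset ι) (w : ι → ℂ) (c : ℂ) :
    (∏ i ∈ s, coin (w i)).coeff c ≤ 1 := by
  rw [← mul_one (∏ i ∈ s, coin (w i))]
  refine coeff_prod_coin_mul_le s w 1 (fun c => ?_) c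
  rw [AddMonoidAlgebra.one_def, AddMonoidAlgebra.coeff_single, Finsupp.single_apply]
  split_ifs <;> norm_num

/-- A dyadic block count `2 ^ (m + 1)` comparable to `N / r`. -/
lemma exists_scale {r N : ℕ} (hr : 0 < r) (h : 2 * r ≤ N) :
    ∃ m, r * 2 ^ (m + 1) ≤ N ∧ N < 2 * r * 2 ^ (m + 1) := by
  have h2 : 2 ≤ N / r := (Nat.le_div_iff_mul_le hr).2 h
  have h1 : 1 ≤ Nat.log 2 (N / r) := Nat.le_log_of_pow_le one_lt_two (by simpa using h2)
  refine ⟨Nat.log 2 (N / r) - 1, ?_, ?_⟩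
  · rw [Nat.sub_add_cancel h1, mul_comm]
    exact (Nat.le_div_iff_mul_le hr).1 (Nat.pow_log_le_self 2 (by omega))
  · rw [Nat.sub_add_cancel h1]
    have := Nat.lt_pow_succ_log_self one_lt_two (N / r)
    rw [Nat.div_lt_iff_lt_mul hr, pow_succ] at this
    linarith

lemma scale_bound {r d m : ℕ} (h : d + 1 < 2 * r * 2 ^ (m + 1)) (hd : 1 ≤ d) :
    1 / ((2 : ℝ) ^ (m + 1)) ≤ 2 * r / d := by
  have h' : ((d : ℝ) + 1) < 2 * r * 2 ^ (m + 1) := by exact_mod_cast h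
  have hd' : (0 : ℝ) < d := by exact_mod_cast hd
  rw [div_le_div_iff₀ (by positivity) hd']
  linarith

lemma centralBinom_scale (m : ℕ) :
    (((2 ^ m).centralBinom : ℝ) / 4 ^ 2 ^ m) ^ 2 ≤ 1 / 2 ^ (m + 1) := by
  refine (centralBinom_bound _).trans ?_
  push_cast
  rw [pow_succ, mul_comm ((2 : ℝ) ^ m)]
  exact one_div_le_one_div_of_le (by positivity) (by linarith)

/-- For `x ≠ 0`, the largest atom of `∑ ± x ^ j`, `j ≤ d`, is at most `(2 / d) ^ (1/2)`: the case of
blocks of length `1`. -/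
lemma exists_coeff_bound {x : ℂ} (hx : x ≠ 0) {d : ℕ} (hd : 1 ≤ d) :
    ∃ t : ℝ, 0 ≤ t ∧ t ^ 2 ≤ 2 / d ∧
      ∀ c, (∏ j ∈ Finset.range (d + 1), coin (x ^ j)).coeff c ≤ t := by
  obtain ⟨m, h1, h2⟩ := exists_scale one_pos (show 2 * 1 ≤ d + 1 by omega)
  refine ⟨((2 ^ m).centralBinom : ℝ) / 4 ^ 2 ^ m, by positivity, ?_, fun c => ?_⟩
  · simpa using (centralBinom_scale m).trans (scale_bound h2 hd)
  · refine (coeff_pow_le_of_indep hx h1 (fun p hp hpx => ?_) c).trans_eq (pow_one _)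
    rw [Polynomial.eq_C_of_natDegree_eq_zero (by omega : p.natDegree = 0)] at hpx ⊢
    simpa using hpx

/-- At a nonzero point outside the finite set `special (2 * k)`, the atoms of `∑ ± x ^ j`, `j ≤ d`,
are `O(d ^ (-k))`. -/
lemma coeff_le_of_not_special {x : ℂ} (hx : x ≠ 0) {k : ℕ} (hk : 0 < k) (hs : x ∉ special (2 * k))
    {d : ℕ} (hd : 1 ≤ d) (c : ℂ) :
    (∏ j ∈ Finset.range (d + 1), coin (x ^ j)).coeff c ≤ (4 * k / d : ℝ) ^ k := by
  have hd' : (0 : ℝ) < d := by exact_mod_cast hd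
  have e4 : (2 * ((2 * k : ℕ) : ℝ)) / d = 4 * k / d := by push_cast; ring
  rcases lt_or_ge (d + 1) (2 * (2 * k)) with hlt | hge
  -- for `d < 4 * k` the bound exceeds `1`
  · refine (coeff_prod_le_one _ _ _).trans (one_le_pow₀ ?_)
    rw [one_le_div hd']
    exact_mod_cast (by omega : d ≤ 4 * k)
  obtain ⟨m, h1, h2⟩ := exists_scale (by omega : 0 < 2 * k) hge
  have hb := scale_bound h2 hd
  rw [e4] at hb
  by_cases hind : ∀ p : Polynomial ℤ, p.natDegree < 2 * k → Polynomial.aeval x p = 0 → p = 0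
  · refine (coeff_pow_le_of_indep hx h1 hind c).trans ?_
    rw [pow_mul]
    exact pow_le_pow_left₀ (by positivity) ((centralBinom_scale m).trans hb) _
  push Not at hind
  obtain ⟨q, hq, hqx, hq0⟩ := hind
  refine (coeff_pow_le_of_no_signs (fun p hp hpx => ?_) c).trans ?_
  · by_contra hp0
    exact hs (mem_special hp0 hp hpx hq0 hq hqx)
  · calc (1 : ℝ) / 2 ^ (d + 1) ≤ 1 / 2 ^ (2 ^ (m + 1) * k) := by
          refine one_div_le_one_div_of_le (by positivity)
            (pow_le_pow_right₀ one_le_two (le_trans ?_ h1))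
          rw [mul_comm]
          exact Nat.mul_le_mul_right _ (by omega)
      _ = (1 / 2 ^ 2 ^ (m + 1)) ^ k := by rw [pow_mul, one_div_pow]
      _ ≤ _ := by
          refine pow_le_pow_left₀ (by positivity) (le_trans ?_ hb) _
          refine one_div_le_one_div_of_le (by positivity) ?_
          exact_mod_cast (Nat.lt_two_pow_self).le

/-- The value at `x` of the single Bernoulli polynomial with sign vector `ε`. -/
noncomputable def evB {n d : ℕ} (ε : Idx n d → Bool) (x : Fin n → ℂ) : ℂ :=
  ∑ J : Idx n d, sgn (ε J) * ∏ j, x j ^ (J.1 j : ℕ)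

/-- The sign vectors whose Bernoulli polynomial vanishes at `x`. -/
noncomputable def zeroSet {n : ℕ} (d : ℕ) (x : Fin n → ℂ) : Finset (Idx n d → Bool) :=
  Finset.univ.filter fun ε => evB ε x = 0

/-- The exponent of the pure power `x i ^ k`, as `k` runs through `0, …, d`. -/
def axis {n : ℕ} (d : ℕ) (i : Fin n) : Fin (d + 1) ↪ Idx n d where
  toFun k := ⟨Pi.single i k, by
    rw [Finset.sum_eq_single i]
    · simpa using Nat.lt_succ_iff.1 k.2
    · intro b _ hb
      simp [Pi.single_eq_of_ne hb]
    · simp⟩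
  inj' a b h := by
    have := congrFun (congrArg Subtype.val h) i
    simpa using this

lemma axis_apply {n d : ℕ} (i : Fin n) (k : Fin (d + 1)) (j : Fin n) :
    (axis d i k).1 j = (Pi.single i k : Fin n → Fin (d + 1)) j := rfl

/-- The probability that a Bernoulli polynomial vanishes at `x` is at most the largest atom of the
signed sum of the powers of any one coordinate of `x`: condition on all other signs. -/
lemma card_zeroSet_le {n d : ℕ} {x : Fin n → ℂ} {i : Fin n} {t : ℝ}
    (h : ∀ c, (∏ j ∈ Finset.range (d + 1), coin (x i ^ j)).coeff c ≤ t) :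
    ((zeroSet d x).card : ℝ) ≤ t * Fintype.card (Idx n d → Bool) := by
  have h1 := coeff_prod_coin (fun J : Idx n d => ∏ j, x j ^ (J.1 j : ℕ)) 0
  have h2 : (∏ J : Idx n d, coin (∏ j, x j ^ (J.1 j : ℕ))).coeff 0 ≤ t := by
    rw [← Finset.prod_compl_mul_prod (Finset.univ.map (axis d i))]
    refine coeff_prod_coin_mul_le _ _ _ (fun c => ?_) 0
    rw [Finset.prod_map]
    convert h c using 2
    rw [Finset.prod_range]
    refine congrArg _ (Finset.prod_congr rfl fun k _ => ?_)
    congr 1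
    rw [Finset.prod_eq_single i]
    · rw [axis_apply, Pi.single_eq_same]
    · intro b _ hb
      rw [axis_apply, Pi.single_eq_of_ne hb, Fin.val_zero, pow_zero]
    · simp
  rw [h1, div_le_iff₀ (by positivity)] at h2
  rw [Fintype.card_fun, Fintype.card_bool]
  push_cast
  simp only [zeroSet, evB]
  refine le_trans (le_of_eq (congrArg (fun s => ((Finset.card s : ℕ) : ℝ)) ?_)) h2
  ext ε
  exact ⟨fun h => Finset.mem_filter.2 ⟨Finset.mem_univ _, (Finset.mem_filter.1 h).2⟩,
    fun h => Finset.mem_filter.2 ⟨Finset.mem_univ _, (Finset.mem_filter.1 h).2⟩⟩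

/-- The constant term is `±1`, so a Bernoulli polynomial never vanishes at the origin. -/
lemma zeroSet_zero {n : ℕ} (d : ℕ) : zeroSet d (0 : Fin n → ℂ) = ∅ := by
  refine Finset.filter_eq_empty_iff.2 fun ε _ => ?_
  rw [evB, Finset.sum_eq_single (⟨0, by simp⟩ : Idx n d)]
  · simp only [Pi.zero_apply, Fin.val_zero, pow_zero, Finset.prod_const_one, mul_one, sgn]
    split_ifs <;> simp
  · intro J _ hJ
    obtain ⟨j, hj⟩ : ∃ j, J.1 j ≠ 0 := by
      by_contra! hall
      exact hJ (Subtype.ext (funext hall))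
    rw [Finset.prod_eq_zero (Finset.mem_univ j), mul_zero]
    simp [hj]
  · simp

/-! ### Counting vanishing patterns -/

/-- Polynomial functions on `ℂ ^ n` of degree at most `D` in each variable. -/
noncomputable def polyFun (n D : ℕ) : Submodule ℂ ((Fin n → ℂ) → ℂ) :=
  Submodule.span ℂ (Set.range fun (e : Fin n → Fin (D + 1)) (x : Fin n → ℂ) =>
    ∏ j, x j ^ (e j : ℕ))

instance (n D : ℕ) : FiniteDimensional ℂ (polyFun n D) :=
  FiniteDimensional.span_of_finite ℂ (Set.finite_range _)

lemma finrank_polyFun_le (n D : ℕ) : Module.finrank ℂ (polyFun n D) ≤ (D + 1) ^ n := by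
  refine (finrank_range_le_card _).trans ?_
  simp

lemma polyFun_mul {n D D' : ℕ} {f g : (Fin n → ℂ) → ℂ} (hf : f ∈ polyFun n D)
    (hg : g ∈ polyFun n D') : f * g ∈ polyFun n (D + D') := by
  have h := Submodule.mul_mem_mul hf hg
  rw [polyFun, polyFun, Submodule.span_mul_span] at h
  refine Submodule.span_mono ?_ h
  rintro _ ⟨_, ⟨e, rfl⟩, _, ⟨e', rfl⟩, rfl⟩
  refine ⟨fun j => ⟨e j + e' j, by omega⟩, ?_⟩
  funext x
  simp [pow_add, Finset.prod_mul_distrib]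

lemma one_mem_polyFun (n D : ℕ) : (1 : (Fin n → ℂ) → ℂ) ∈ polyFun n D :=
  Submodule.subset_span ⟨0, by funext x; simp⟩

lemma polyFun_prod {n D : ℕ} {ι : Type} (s : Finset ι) (f : ι → (Fin n → ℂ) → ℂ)
    (h : ∀ i, f i ∈ polyFun n D) : ∏ i ∈ s, f i ∈ polyFun n (s.card * D) := by
  induction s using Finset.induction_on with
  | empty => simpa using one_mem_polyFun n _
  | insert a s ha ih =>
    rw [Finset.prod_insert ha, Finset.card_insert_of_notMem ha, add_mul, one_mul, add_comm]
    exact polyFun_mul (h a) ih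

lemma evB_mem {n d : ℕ} (ε : Idx n d → Bool) : evB ε ∈ polyFun n d := by
  have : evB ε = ∑ J : Idx n d, sgn (ε J) • fun x : Fin n → ℂ => ∏ j, x j ^ (J.1 j : ℕ) := by
    funext x
    simp [evB]
  rw [this]
  exact Submodule.sum_mem _ fun J _ => Submodule.smul_mem _ _ (Submodule.subset_span ⟨J.1, rfl⟩)

/-- Given `k` rows of `m` polynomials, the ones vanishing at `x` are exactly those selected by `φ`, one
from each row. -/
def Exact {n d k m : ℕ} (F : Fin k × Fin m → Idx n d → Bool) (φ : Fin k → Fin m)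
    (x : Fin n → ℂ) : Prop := ∀ p, evB (F p) x = 0 ↔ p.2 = φ p.1

/-- Bézout-type bound: at most `(k * m * d + 1) ^ n` selections `φ` are the exact vanishing pattern of
some point. For each such `φ` multiply the polynomials that `φ` does not select. The product is
nonzero at the point of `φ`, and vanishes at the point of any other `ψ`, since some polynomial
selected by `ψ` is a factor. So the products are linearly independent in a space of polynomials of
dimension at most `(k * m * d + 1) ^ n`. -/
lemma card_exact_le {n d k m : ℕ} (F : Fin k × Fin m → Idx n d → Bool)
    (s : Finset (Fin k → Fin m)) (hs : ∀ φ ∈ s, ∃ x, Exact F φ x) :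
    s.card ≤ (k * m * d + 1) ^ n := by
  choose! x hx using hs
  let h : (Fin k → Fin m) → Fin k × Fin m → (Fin n → ℂ) → ℂ :=
    fun φ p => if p.2 = φ p.1 then 1 else evB (F p)
  let g : s → polyFun n (k * m * d) := fun φ => ⟨∏ p, h φ p, by
    have := polyFun_prod Finset.univ (h φ) (D := d) (fun p => by
      simp only [h]
      split_ifs
      · exact one_mem_polyFun n d
      · exact evB_mem _)
    simpa using this⟩
  have happ : ∀ (φ : s) (y : Fin n → ℂ), (g φ : (Fin n → ℂ) → ℂ) y = ∏ p, h φ p y := by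
    intro φ y
    simp [g]
  have hne : ∀ φ : s, (g φ : (Fin n → ℂ) → ℂ) (x φ) ≠ 0 := by
    intro φ
    rw [happ]
    refine Finset.prod_ne_zero_iff.2 fun p _ => ?_
    simp only [h]
    split_ifs with hp
    · simp
    · exact fun h0 => hp ((hx φ φ.2 p).1 h0)
  have hzero : ∀ φ ψ : s, φ ≠ ψ → (g φ : (Fin n → ℂ) → ℂ) (x ψ) = 0 := by
    intro φ ψ hφψ
    rw [happ]
    obtain ⟨i, hi⟩ : ∃ i, φ.1 i ≠ ψ.1 i := by
      by_contra! hall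
      exact hφψ (Subtype.ext (funext hall))
    refine Finset.prod_eq_zero (Finset.mem_univ (i, ψ.1 i)) ?_
    simp only [h]
    rw [if_neg (Ne.symm hi)]
    exact (hx ψ ψ.2 _).2 rfl
  have hlin : LinearIndependent ℂ g := by
    rw [Fintype.linearIndependent_iff]
    intro a ha ψ
    have h1 := congrFun (congrArg Subtype.val ha) (x ψ)
    simp only [Submodule.coe_sum, Submodule.coe_smul, Finset.sum_apply, Pi.smul_apply,
      smul_eq_mul, Submodule.coe_zero, Pi.zero_apply] at h1
    rw [Finset.sum_eq_single ψ] at h1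
    · exact (mul_eq_zero.1 h1).resolve_right (hne ψ)
    · intro φ _ hφ
      rw [hzero φ ψ hφ, mul_zero]
    · simp
  have := hlin.fintype_card_le_finrank
  rw [Fintype.card_coe] at this
  exact this.trans (finrank_polyFun_le _ _)

lemma prod_ite_eq_pow {k m : ℕ} (φ : Fin k → Fin m) (c : ℝ) :
    ∏ p : Fin k × Fin m, (if p.2 = φ p.1 then 1 else c) = c ^ (k * (m - 1)) := by
  rw [Fintype.prod_prod_type]
  have : ∀ i : Fin k, ∏ j : Fin m, (if j = φ i then (1 : ℝ) else c) = c ^ (m - 1) := by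
    intro i
    rw [Finset.prod_ite, Finset.prod_const_one, one_mul, Finset.prod_const]
    congr 1
    rw [Finset.filter_ne' Finset.univ (φ i), Finset.card_erase_of_mem (Finset.mem_univ _)]
    simp
  simp only [this]
  rw [Finset.prod_const, Finset.card_univ, Fintype.card_fin, ← pow_mul, mul_comm]

/-- A bad system `ε` with a common zero `x ∈ G`, placed at the positions selected by `φ`, extends to an
array with vanishing pattern exactly `φ` at `x` by any choice, at the `k * (m - 1)` other positions,
of polynomials not vanishing at `x`. -/
lemma le_card_exact {n d k m : ℕ} {G : Set (Fin n → ℂ)} {q : ℝ} (hq : q ≤ 1)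
    (hG : ∀ x ∈ G, ((zeroSet d x).card : ℝ) ≤ q * Fintype.card (Idx n d → Bool))
    (φ : Fin k → Fin m) :
    ((Finset.univ.filter fun ε : Fin k → Idx n d → Bool =>
        ∃ x ∈ G, ∀ i, evB (ε i) x = 0).card : ℝ) *
        ((1 - q) * Fintype.card (Idx n d → Bool)) ^ (k * (m - 1)) ≤
      ((Finset.univ.filter fun F : Fin k × Fin m → Idx n d → Bool => ∃ x, Exact F φ x).card : ℝ) := by
  set E := Finset.univ.filter fun ε : Fin k → Idx n d → Bool => ∃ x ∈ G, ∀ i, evB (ε i) x = 0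
    with hE
  have hx : ∀ ε ∈ E, ∃ x ∈ G, ∀ i, evB (ε i) x = 0 := fun ε h => by
    rw [hE, Finset.mem_filter] at h
    exact h.2
  choose! x hxG hx0 using hx
  -- the arrays that extend `ε` and have vanishing pattern `φ` at the chosen zero `x ε`
  let T : (Fin k → Idx n d → Bool) → Finset (Fin k × Fin m → Idx n d → Bool) := fun ε =>
    Fintype.piFinset fun p => if p.2 = φ p.1 then {ε p.1} else (zeroSet d (x ε))ᶜ
  have hT : ∀ ε F, F ∈ T ε ↔ ∀ p : Fin k × Fin m, if p.2 = φ p.1 then F p = ε p.1 else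
      evB (F p) (x ε) ≠ 0 := by
    intro ε F
    simp only [T, Fintype.mem_piFinset]
    refine forall_congr' fun p => ?_
    split_ifs <;> simp [zeroSet]
  have hsub : E.biUnion T ⊆ Finset.univ.filter fun F => ∃ x, Exact F φ x := by
    intro F hF
    obtain ⟨ε, hε, hF⟩ := Finset.mem_biUnion.1 hF
    rw [hT] at hF
    refine Finset.mem_filter.2 ⟨Finset.mem_univ _, x ε, fun p => ?_⟩
    have := hF p
    split_ifs at this with hp
    · simp [hp, this, hx0 ε hε]
    · simp [hp, this]
  have hdisj : (E : Set (Fin k → Idx n d → Bool)).PairwiseDisjoint T := by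
    intro ε _ ε' _ hne
    refine Finset.disjoint_left.2 fun F h1 h2 => hne ?_
    rw [hT] at h1 h2
    funext i
    have h1 := h1 (i, φ i)
    have h2 := h2 (i, φ i)
    simp only [if_true] at h1 h2
    rw [← h1, ← h2]
  have hcard : ∀ ε ∈ E, ((1 - q) * Fintype.card (Idx n d → Bool)) ^ (k * (m - 1)) ≤
      ((T ε).card : ℝ) := by
    intro ε hε
    rw [← prod_ite_eq_pow φ, Fintype.card_piFinset]
    push_cast
    have hnn : 0 ≤ (1 - q) * (Fintype.card (Idx n d → Bool) : ℝ) :=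
      mul_nonneg (by linarith) (Nat.cast_nonneg _)
    refine Finset.prod_le_prod (fun p _ => ?_) (fun p _ => ?_)
    · split_ifs
      · exact zero_le_one
      · exact hnn
    · split_ifs
      · simp
      · rw [Finset.card_compl, Nat.cast_sub (Finset.card_le_univ _)]
        linarith [hG _ (hxG ε hε)]
  calc _ = ∑ ε ∈ E, ((1 - q) * (Fintype.card (Idx n d → Bool) : ℝ)) ^ (k * (m - 1)) := by
        rw [Finset.sum_const, nsmul_eq_mul]
    _ ≤ ∑ ε ∈ E, ((T ε).card : ℝ) := Finset.sum_le_sum hcard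
    _ = ((E.biUnion T).card : ℝ) := by rw [Finset.card_biUnion hdisj]; push_cast; rfl
    _ ≤ _ := by exact_mod_cast Finset.card_le_card hsub

/-- Double counting of the pairs (selection `φ`, array `F`) such that `φ` is the exact pattern of `F` at
some point: `le_card_exact` bounds it below for each `φ`, `card_exact_le` above for each `F`. -/
lemma card_bad_mul_le {n d k m : ℕ} {G : Set (Fin n → ℂ)} {q : ℝ} (hq : q ≤ 1)
    (hG : ∀ x ∈ G, ((zeroSet d x).card : ℝ) ≤ q * Fintype.card (Idx n d → Bool)) :
    (m : ℝ) ^ k * (((Finset.univ.filter fun ε : Fin k → Idx n d → Bool =>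
        ∃ x ∈ G, ∀ i, evB (ε i) x = 0).card : ℝ) *
        ((1 - q) * Fintype.card (Idx n d → Bool)) ^ (k * (m - 1))) ≤
      (Fintype.card (Idx n d → Bool) : ℝ) ^ (k * m) * ((k * m * d + 1 : ℕ) : ℝ) ^ n := by
  have hsum := Finset.sum_le_sum fun (φ : Fin k → Fin m) (_ : φ ∈ Finset.univ) =>
    le_card_exact hq hG φ
  rw [Finset.sum_const, Finset.card_univ, Fintype.card_fun, Fintype.card_fin, Fintype.card_fin,
    nsmul_eq_mul, Nat.cast_pow] at hsum
  refine hsum.trans ?_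
  norm_cast
  refine (Finset.sum_card_bipartiteAbove_eq_sum_card_bipartiteBelow
    (fun (φ : Fin k → Fin m) (F : Fin k × Fin m → Idx n d → Bool) => ∃ x, Exact F φ x)).le.trans ?_
  refine (Finset.sum_le_sum fun F _ => card_exact_le F _ ?_).trans ?_
  · intro φ hφ
    exact (Finset.mem_filter.1 hφ).2
  · rw [Finset.sum_const, Finset.card_univ, smul_eq_mul, Fintype.card_fun, Fintype.card_prod,
      Fintype.card_fin, Fintype.card_fin]

/-! ### Systems of Bernoulli polynomials -/

lemma card_signs (n d : ℕ) :
    (Fintype.card (Signs' n d) : ℝ) = (Fintype.card (Idx n d → Bool) : ℝ) ^ (n + 1) := by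
  have h := Fintype.card_pi_const (Idx n d → Bool) (n + 1)
  rw [← Nat.cast_pow, ← h]

/-- If a single Bernoulli polynomial vanishes at each given point of `G` with probability at most `q`,
then the system has a common zero in `G` with probability `O(d ^ n * q)`. -/
lemma card_bad_le {n d : ℕ} (hd : 1 ≤ d) {G : Set (Fin n → ℂ)} {q : ℝ} (hq0 : 0 < q)
    (hG : ∀ x ∈ G, ((zeroSet d x).card : ℝ) ≤ q * Fintype.card (Idx n d → Bool)) :
    ((Finset.univ.filter fun ε : Fin (n + 1) → Idx n d → Bool =>
        ∃ x ∈ G, ∀ i, evB (ε i) x = 0).card : ℝ) ≤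
      4 * (n + 1) * ((n + 2) * d) ^ n * q * Fintype.card (Signs' n d) := by
  set E : ℝ := ((Finset.univ.filter fun ε : Fin (n + 1) → Idx n d → Bool =>
        ∃ x ∈ G, ∀ i, evB (ε i) x = 0).card : ℝ) with hE
  set a : ℝ := (Fintype.card (Idx n d → Bool) : ℝ) with ha
  have ha0 : 0 < a := by rw [ha]; exact_mod_cast Fintype.card_pos
  have hS : (Fintype.card (Signs' n d) : ℝ) = a ^ (n + 1) := card_signs n d
  have hd1 : (1 : ℝ) ≤ d := by exact_mod_cast hd
  have hn0 : (0 : ℝ) ≤ n := Nat.cast_nonneg n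
  have hbase : (1 : ℝ) ≤ (n + 2) * d := by nlinarith
  rw [hS]
  -- for `q > 1` the right-hand side exceeds the number of all systems
  rcases lt_or_ge 1 q with hq | hq
  · have h1 : E ≤ a ^ (n + 1) := by
      rw [← hS, hE]
      exact Nat.cast_le.2 (Finset.card_le_univ _)
    refine h1.trans (le_mul_of_one_le_left (by positivity) ?_)
    have h2 : (1 : ℝ) ≤ 4 * (n + 1) * ((n + 2) * d) ^ n :=
      one_le_mul_of_one_le_of_one_le (by linarith) (one_le_pow₀ hbase)
    exact one_le_mul_of_one_le_of_one_le h2 hq.le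
  set b : ℝ := 2 * (n + 1) * q with hb
  have hb0 : 0 < b := by positivity
  -- rows of length `m ≈ 1 / (2 * (n + 1) * q)`: long enough to gain the factor `q`, short enough that
  -- the unselected polynomials are all nonzero at a given point of `G` with probability at least `1/2`
  obtain ⟨m, hm1, hm2, hm3⟩ : ∃ m : ℕ, 1 ≤ m ∧ ((m - 1 : ℕ) : ℝ) * b ≤ 1 ∧ 1 ≤ m * b := by
    refine ⟨⌊1 / b⌋₊ + 1, by omega, ?_, ?_⟩
    · rw [Nat.add_sub_cancel, ← le_div_iff₀ hb0]
      exact Nat.floor_le (by positivity)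
    · rw [← div_le_iff₀ hb0]
      push_cast
      exact (Nat.lt_floor_add_one _).le
  have hm0 : (0 : ℝ) < m := by exact_mod_cast hm1
  have hmain := card_bad_mul_le (k := n + 1) (m := m) hq hG
  rw [← hE, ← ha, mul_pow] at hmain
  have hbern : (1 / 2 : ℝ) ≤ (1 - q) ^ ((n + 1) * (m - 1)) := by
    -- Bernoulli's inequality
    have := one_add_mul_le_pow (a := -q) (by linarith) ((n + 1) * (m - 1))
    rw [← sub_eq_add_neg] at this
    refine le_trans ?_ this
    push_cast
    rw [hb] at hm2
    linarith
  have hD : (((n + 1) * m * d + 1 : ℕ) : ℝ) ≤ (n + 2) * d * m := by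
    have : (1 : ℝ) ≤ d * m := one_le_mul_of_one_le_of_one_le hd1 (by exact_mod_cast hm1)
    push_cast
    nlinarith
  have hpow : a ^ ((n + 1) * m) = a ^ (n + 1) * a ^ ((n + 1) * (m - 1)) := by
    rw [← pow_add]
    congr 1
    obtain ⟨m', rfl⟩ := Nat.exists_eq_add_of_le hm1
    rw [Nat.add_sub_cancel_left]
    ring
  have hE0 : 0 ≤ E := by rw [hE]; positivity
  have hA : 0 < a ^ ((n + 1) * (m - 1)) := by positivity
  have h1 : a ^ ((n + 1) * (m - 1)) * ((m : ℝ) ^ n * (m * (E * (1 / 2)))) ≤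
      a ^ ((n + 1) * (m - 1)) * ((m : ℝ) ^ n * (a ^ (n + 1) * ((n + 2) * d) ^ n)) := by
    calc _ = (m : ℝ) ^ (n + 1) * (E * (1 / 2 * a ^ ((n + 1) * (m - 1)))) := by ring
      _ ≤ _ := by gcongr
      _ ≤ _ := hmain
      _ ≤ a ^ ((n + 1) * m) * ((n + 2) * d * m) ^ n := by gcongr
      _ = _ := by rw [hpow, mul_pow _ (m : ℝ)]; ring
  have h2 : m * (E * (1 / 2)) ≤ a ^ (n + 1) * ((n + 2) * d) ^ n :=
    le_of_mul_le_mul_left (le_of_mul_le_mul_left h1 hA) (by positivity)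
  calc E ≤ (m * b) * E := le_mul_of_one_le_left hE0 hm3
    _ = 2 * b * (m * (E * (1 / 2))) := by ring
    _ ≤ 2 * b * (a ^ (n + 1) * ((n + 2) * d) ^ n) := by gcongr
    _ = _ := by rw [hb]; ring

/-- Any fixed point is a common zero with probability at most `2 / d`: two of the `n + 1 ≥ 2`
independent equations already contribute a factor `(2 / d) ^ (1/2)` each. -/
lemma card_common_zero_le {n d : ℕ} (hn : 1 ≤ n) (hd : 1 ≤ d) (x : Fin n → ℂ) :
    ((Finset.univ.filter fun ε : Fin (n + 1) → Idx n d → Bool =>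
        ∀ i, evB (ε i) x = 0).card : ℝ) ≤ 2 / d * Fintype.card (Signs' n d) := by
  have hset : (Finset.univ.filter fun ε : Fin (n + 1) → Idx n d → Bool =>
        ∀ i, evB (ε i) x = 0) = Fintype.piFinset fun _ => zeroSet d x := by
    ext ε
    simp [zeroSet, Fintype.mem_piFinset]
  rw [hset, Fintype.card_piFinset, Finset.prod_const, Finset.card_univ, Fintype.card_fin, card_signs]
  push_cast
  set a : ℝ := (Fintype.card (Idx n d → Bool) : ℝ) with ha
  have ha0 : 0 ≤ a := Nat.cast_nonneg _
  by_cases hx : x = 0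
  · subst hx
    rw [zeroSet_zero]
    simp only [Finset.card_empty, Nat.cast_zero, ne_eq, Nat.add_eq_zero_iff, one_ne_zero, and_false,
      not_false_eq_true, zero_pow]
    positivity
  obtain ⟨i, hi⟩ := Function.ne_iff.1 hx
  obtain ⟨t, ht0, ht2, ht⟩ := exists_coeff_bound hi hd
  have h1 : ((zeroSet d x).card : ℝ) ≤ t * a := card_zeroSet_le ht
  have h2 : ((zeroSet d x).card : ℝ) ≤ a := by rw [ha]; exact_mod_cast Finset.card_le_univ _
  obtain ⟨k, rfl⟩ := Nat.exists_eq_add_of_le' hn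
  calc ((zeroSet d x).card : ℝ) ^ (k + 1 + 1)
      = ((zeroSet d x).card : ℝ) ^ 2 * ((zeroSet d x).card : ℝ) ^ k := by ring
    _ ≤ (t * a) ^ 2 * a ^ k := by gcongr
    _ = t ^ 2 * a ^ (k + 1 + 1) := by ring
    _ ≤ _ := by gcongr

theorem stmt4 (n : ℕ) (hn : 1 ≤ n) :
    ∃ K : ℝ, 0 < K ∧ ∀ d : ℕ, 1 ≤ d →
      Pd' n d {ε : Signs' n d | ∃ x : Fin n → ℂ, ∀ i, fSys' n d ε i x = 0} ≤ K / d := by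
  -- the points with all coordinates zero or special are dealt with one at a time, the others together
  have hfin : {x : Fin n → ℂ | ∀ i, x i ∈ insert 0 (special (2 * (n + 1)))}.Finite := by
    have := Set.Finite.pi' fun _ : Fin n => (special_finite (2 * (n + 1))).insert 0
    exact this
  set X := hfin.toFinset with hX
  refine ⟨4 * (n + 1) * (n + 2) ^ n * (4 * (n + 1)) ^ (n + 1) + X.card * 2, by positivity,
    fun d hd => ?_⟩
  have hd0 : (0 : ℝ) < d := by exact_mod_cast hd
  have hcard : (0 : ℝ) < Fintype.card (Signs' n d) := by exact_mod_cast Fintype.card_pos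
  have hpoor := card_bad_le (n := n) hd (G := {x | x ∉ X})
    (q := (4 * ((n + 1 : ℕ) : ℝ) / d) ^ (n + 1)) (by positivity) (fun x hx => by
      have hx' : ∃ i, x i ∉ insert 0 (special (2 * (n + 1))) := by
        by_contra! hall
        exact hx (hfin.mem_toFinset.2 hall)
      obtain ⟨i, hi⟩ := hx'
      rw [Set.mem_insert_iff, not_or] at hi
      exact card_zeroSet_le fun c => coeff_le_of_not_special hi.1 (Nat.succ_pos n) hi.2 hd c)
  rw [Pd', div_le_iff₀ hcard]
  set A := Finset.univ.filter fun ε : Fin (n + 1) → Idx n d → Bool =>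
        ∃ x ∈ {x : Fin n → ℂ | x ∉ X}, ∀ i, evB (ε i) x = 0 with hA
  let B : (Fin n → ℂ) → Finset (Fin (n + 1) → Idx n d → Bool) := fun x =>
    Finset.univ.filter fun ε => ∀ i, evB (ε i) x = 0
  have hsub : {ε : Signs' n d | ∃ x : Fin n → ℂ, ∀ i, fSys' n d ε i x = 0} ⊆
      ((A ∪ X.biUnion B : Finset (Signs' n d)) : Set (Signs' n d)) := by
    rintro ε ⟨x, hx⟩
    rw [Finset.mem_coe, Finset.mem_union, Finset.mem_biUnion]
    by_cases hxX : x ∈ X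
    · exact Or.inr ⟨x, hxX, Finset.mem_filter.2 ⟨Finset.mem_univ _, hx⟩⟩
    · exact Or.inl (Finset.mem_filter.2 ⟨Finset.mem_univ _, x, hxX, hx⟩)
  have h1 := Set.ncard_le_ncard hsub (Finset.finite_toSet _)
  rw [Set.ncard_coe_finset] at h1
  have h2 : ((X.biUnion B).card : ℝ) ≤ X.card * (2 / d * Fintype.card (Signs' n d)) := by
    calc ((X.biUnion B).card : ℝ) ≤ ∑ x ∈ X, ((B x).card : ℝ) := by
          exact_mod_cast Finset.card_biUnion_le
      _ ≤ ∑ _x ∈ X, 2 / d * (Fintype.card (Signs' n d) : ℝ) :=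
          Finset.sum_le_sum fun x _ => card_common_zero_le hn hd x
      _ = _ := by rw [Finset.sum_const, nsmul_eq_mul]
  have h3 : ((A ∪ X.biUnion B).card : ℝ) ≤ A.card + (X.biUnion B).card := by
    exact_mod_cast Finset.card_union_le _ _
  refine ((Nat.cast_le.2 h1).trans (h3.trans (add_le_add hpoor h2))).trans_eq ?_
  push_cast
  rw [div_pow, mul_pow _ (d : ℝ)]
  field_simp
  ring
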